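/- arXiv:1402.5509 — 2 statements merged into one kernel-verified Lean document; each statement's English description precedes it below -/
import Mathlib

section
/- Let K be an algebraically closed field and n ≥ 2. Let R_Y = K[S_{ij} : 1 ≤ i < j ≤ n+2] and let I_Y ⊆ R_Y be the ideal generated by all Plücker relations S_{ij}S_{kl} − S_{ik}S_{jl} + S_{il}S_{jk} for 1 ≤ i < j < k < l ≤ n+2. Then in the quotient ring R_Y/I_Y the residue class of the variable S_{n+1,n+2} is a prime element, and it does not divide the residue class of any variable S_{ij} with (i,j) ≠ (n+1, n+2). -/
open MvPolynomial

/-- The index set of the polynomial ring `R_Y = K[S_{ij} : 1 ≤ i < j ≤ n+2]`. -/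
abbrev PairIdx (n : ℕ) : Type := {p : ℕ × ℕ // 1 ≤ p.1 ∧ p.1 < p.2 ∧ p.2 ≤ n + 2}

/-- The variable `S_{ab}` of `R_Y` (junk value `0` for invalid index pairs). -/
noncomputable def S (K : Type*) [Field K] (n a b : ℕ) :
    MvPolynomial (PairIdx n) K :=
  if h : 1 ≤ a ∧ a < b ∧ b ≤ n + 2 then X ⟨(a, b), h⟩ else 0

/-- The ideal `I_Y ⊆ R_Y` generated by all Plücker relations
`S_{ij}S_{kl} − S_{ik}S_{jl} + S_{il}S_{jk}` for `1 ≤ i < j < k < l ≤ n+2`. -/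
noncomputable def IY (K : Type*) [Field K] (n : ℕ) :
    Ideal (MvPolynomial (PairIdx n) K) :=
  Ideal.span {x : MvPolynomial (PairIdx n) K | ∃ i j k l : ℕ,
      1 ≤ i ∧ i < j ∧ j < k ∧ k < l ∧ l ≤ n + 2 ∧
      x = S K n i j * S K n k l - S K n i k * S K n j l + S K n i l * S K n j k}

/-!
Modulo `S_{n+1,n+2}`, the Plücker relations are the relations among the `2 × 2` minors
`x_i y_j - x_j y_i` of the generic `2 × (n+2)` matrix with `x_{n+1} = x_{n+2} = 0`: the ideal
`I_Y + (S_{n+1,n+2})` is the kernel of the map sending `S_{ij}` to this minor. It is therefore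
prime, and it contains no other variable, as the remaining minors are nonzero.

The kernel is computed by standard monomial theory. If `i < j < k < l`, a Plücker relation rewrites
`S_{il} S_{jk}` as a combination of `S_{ik} S_{jl}` and `S_{ij} S_{kl}`, so monomials whose index
pairs form a chain and avoid `(n+1, n+2)` span the quotient. For a diagonal term order the minor has
leading term `x_i y_j`, and a chain of index pairs is recovered from the multisets of its first and
second components. The images of the standard monomials thus have distinct leading terms and are
linearly independent.
-/

namespace Plucker

open scoped MonomialOrder

section QuotientPrime

variable {R : Type*} [CommRing R] {I : Ideal R} {s : R}

theorem map_quotientMk_sup_span_singleton (I : Ideal R) (s : R) :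
    (I ⊔ Ideal.span {s}).map (Ideal.Quotient.mk I) = Ideal.span {Ideal.Quotient.mk I s} := by
  rw [Ideal.map_sup, Ideal.map_quotient_self, bot_sup_eq, Ideal.map_span, Set.image_singleton]

theorem quotientMk_dvd_quotientMk_iff {x : R} :
    Ideal.Quotient.mk I s ∣ Ideal.Quotient.mk I x ↔ x ∈ I ⊔ Ideal.span {s} := by
  rw [← Ideal.mem_span_singleton, ← map_quotientMk_sup_span_singleton,
    Ideal.mem_quotient_iff_mem le_sup_left]

theorem prime_quotientMk_of_isPrime_sup_span_singleton (hs : s ∉ I)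
    (hprime : (I ⊔ Ideal.span {s}).IsPrime) : Prime (Ideal.Quotient.mk I s) := by
  have hne : Ideal.Quotient.mk I s ≠ 0 := by rwa [Ne, Ideal.Quotient.eq_zero_iff_mem]
  rw [← Ideal.span_singleton_prime hne, ← map_quotientMk_sup_span_singleton]
  exact Ideal.isPrime_map_quotientMk_of_isPrime le_sup_left

end QuotientPrime

section MonomialOrder

theorem lex_single_add_single_lt {σ : Type*} [LinearOrder σ] [WellFoundedGT σ] {a b c : σ}
    (hb : a < b) (hc : a < c) (d : σ) :
    Finsupp.single b 1 + Finsupp.single c 1 ≺[MonomialOrder.lex]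
      Finsupp.single d 1 + Finsupp.single a 1 := by
  have hlt : Finsupp.single b 1 + Finsupp.single c 1 ≺[MonomialOrder.lex] Finsupp.single a 1 := by
    rw [MonomialOrder.lex_lt_iff, Finsupp.Lex.lt_iff]
    refine ⟨a, fun k hk ↦ ?_, ?_⟩
    · simp [hk.ne', (hk.trans hb).ne', (hk.trans hc).ne']
    · simp [hb.ne', hc.ne']
  exact hlt.trans_le (MonomialOrder.lex.toSyn_monotone le_add_self)

theorem linearIndependent_of_monic_of_injective_degree {ι σ R : Type*} [CommRing R]
    (o : MonomialOrder σ) {f : ι → MvPolynomial σ R} (hmonic : ∀ i, o.Monic (f i))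
    (hinj : Function.Injective fun i ↦ o.degree (f i)) : LinearIndependent R f := by
  rw [linearIndependent_iff]
  intro c hc
  by_contra hne
  obtain ⟨i, hi, hmax⟩ := c.support.exists_max_image (fun j ↦ o.toSyn (o.degree (f j)))
    (Finsupp.support_nonempty_iff.mpr hne)
  have hcoeff : coeff (o.degree (f i)) (Finsupp.linearCombination R f c) = c i := by
    rw [Finsupp.linearCombination_apply, Finsupp.sum, coeff_sum,
      Finset.sum_eq_single_of_mem i hi, coeff_smul, (hmonic i).coeff_degree, smul_eq_mul, mul_one]
    intro j hj hji
    have hlt : o.degree (f j) ≺[o] o.degree (f i) :=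
      (hmax j hj).lt_of_ne fun heq ↦ hji (hinj (o.toSyn.injective heq))
    rw [coeff_smul, o.coeff_eq_zero_of_lt hlt, smul_zero]
  rw [hc, coeff_zero] at hcoeff
  exact Finsupp.mem_support_iff.mp hi hcoeff.symm

end MonomialOrder

section ChainMultiset

variable {ι α β : Type*} [Preorder ι] [PartialOrder α] [PartialOrder β]

theorem exists_isGreatest_of_isChain {s : Multiset ι} (hs : s ≠ 0)
    (hchain : IsChain (· ≤ ·) {p | p ∈ s}) : ∃ p, IsGreatest {p | p ∈ s} p := by
  classical
  obtain ⟨p, hp, hmax⟩ := s.toFinset.exists_maximal (by simpa using hs)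
  simp only [Multiset.mem_toFinset] at hp hmax
  exact ⟨p, hp, fun q hq ↦ (hchain.total hp hq).elim (hmax hq) id⟩

theorem apply_eq_of_map_eq_of_isGreatest {s t : Multiset ι} {f : ι → α} (hf : Monotone f)
    (hst : s.map f = t.map f) {p q : ι} (hp : IsGreatest {r | r ∈ s} p)
    (hq : IsGreatest {r | r ∈ t} q) : f p = f q := by
  have himage : f '' {r | r ∈ s} = f '' {r | r ∈ t} := by
    ext a
    change (∃ r ∈ s, f r = a) ↔ ∃ r ∈ t, f r = a
    rw [← Multiset.mem_map, ← Multiset.mem_map, hst]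
  exact (hf.map_isGreatest hp).unique (himage ▸ hf.map_isGreatest hq)

theorem eq_of_isChain_of_map_eq {f : ι → α} {g : ι → β} (hf : Monotone f) (hg : Monotone g)
    (hfg : ∀ p q, f p = f q → g p = g q → p = q) {s t : Multiset ι}
    (hs : IsChain (· ≤ ·) {p | p ∈ s}) (ht : IsChain (· ≤ ·) {p | p ∈ t})
    (hsf : s.map f = t.map f) (hsg : s.map g = t.map g) : s = t := by
  induction hcard : s.card generalizing s t with
  | zero =>
    rw [Multiset.card_eq_zero] at hcard
    subst hcard
    exact (Multiset.map_eq_zero.mp hsf.symm).symm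
  | succ k ih =>
    have hs0 : s ≠ 0 := by rintro rfl; simp at hcard
    have ht0 : t ≠ 0 := by rintro rfl; exact hs0 (Multiset.map_eq_zero.mp hsf)
    obtain ⟨p, hp⟩ := exists_isGreatest_of_isChain hs0 hs
    obtain ⟨q, hq⟩ := exists_isGreatest_of_isChain ht0 ht
    obtain rfl : p = q := hfg p q (apply_eq_of_map_eq_of_isGreatest hf hsf hp hq)
      (apply_eq_of_map_eq_of_isGreatest hg hsg hp hq)
    obtain ⟨s, rfl⟩ := Multiset.exists_cons_of_mem hp.1
    obtain ⟨t, rfl⟩ := Multiset.exists_cons_of_mem hq.1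
    simp only [Multiset.map_cons, Multiset.cons_inj_right, Multiset.card_cons,
      Nat.add_right_cancel_iff] at hsf hsg hcard
    rw [ih (hs.mono fun _ ↦ Multiset.mem_cons_of_mem) (ht.mono fun _ ↦ Multiset.mem_cons_of_mem)
      hsf hsg hcard]

theorem finsupp_eq_of_isChain_of_mapDomain_eq {f : ι → α} {g : ι → β} (hf : Monotone f)
    (hg : Monotone g) (hfg : ∀ p q, f p = f q → g p = g q → p = q) {m m' : ι →₀ ℕ}
    (hm : IsChain (· ≤ ·) (m.support : Set ι)) (hm' : IsChain (· ≤ ·) (m'.support : Set ι))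
    (hmf : m.mapDomain f = m'.mapDomain f) (hmg : m.mapDomain g = m'.mapDomain g) : m = m' := by
  classical
  have hmem (m : ι →₀ ℕ) : {p | p ∈ Finsupp.toMultiset m} = m.support := by
    ext p; exact Finsupp.mem_toMultiset m p
  have hmultiset : Finsupp.toMultiset m = Finsupp.toMultiset m' := by
    refine eq_of_isChain_of_map_eq hf hg hfg ?_ ?_ ?_ ?_
    · rwa [hmem]
    · rwa [hmem]
    · rw [Finsupp.toMultiset_map, Finsupp.toMultiset_map, hmf]
    · rw [Finsupp.toMultiset_map, Finsupp.toMultiset_map, hmg]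
  exact Multiset.toFinsupp.symm.injective hmultiset

end ChainMultiset

theorem exists_eq_single_add_single_add {ι : Type*} {m : ι →₀ ℕ} {p q : ι} (hne : p ≠ q)
    (hp : p ∈ m.support) (hq : q ∈ m.support) :
    ∃ m₀, m = Finsupp.single p 1 + (Finsupp.single q 1 + m₀) := by
  classical
  rw [Finsupp.mem_support_iff] at hp hq
  have hle : Finsupp.single p 1 + Finsupp.single q 1 ≤ m := by
    intro r
    simp only [Finsupp.add_apply, Finsupp.single_apply]
    grind
  obtain ⟨m₀, rfl⟩ := exists_add_of_le hle
  exact ⟨m₀, add_assoc _ _ _⟩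

section Minors

variable {K : Type*} [Field K] {n : ℕ} {A : Type*} [CommRing A]

/-- The `2 × 2` minor on columns `i` and `j` of the matrix with rows `x` and `y`. -/
def minor (x y : ℕ → A) (i j : ℕ) : A := x i * y j - x j * y i

theorem minor_plucker (x y : ℕ → A) (i j k l : ℕ) :
    minor x y i j * minor x y k l - minor x y i k * minor x y j l +
      minor x y i l * minor x y j k = 0 := by
  simp only [minor]
  ring

variable [Algebra K A]

variable (K n) in
/-- The Plücker parametrization: the `K`-algebra map sending `S_{ij}` to the minor on columns
`i` and `j` of the matrix with rows `x` and `y`. -/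
noncomputable def minorHom (x y : ℕ → A) : MvPolynomial (PairIdx n) K →ₐ[K] A :=
  aeval fun p ↦ minor x y p.1.1 p.1.2

theorem S_eq_X (p : PairIdx n) : S K n p.1.1 p.1.2 = X p :=
  dif_pos p.2

theorem minorHom_S (x y : ℕ → A) {i j : ℕ} (hi : 1 ≤ i) (hij : i < j) (hj : j ≤ n + 2) :
    minorHom K n x y (S K n i j) = minor x y i j := by
  rw [S_eq_X ⟨(i, j), hi, hij, hj⟩, minorHom, aeval_X]

theorem IY_le_ker_minorHom (x y : ℕ → A) : IY K n ≤ RingHom.ker (minorHom K n x y) := by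
  refine Ideal.span_le.mpr ?_
  rintro _ ⟨i, j, k, l, hi, hij, hjk, hkl, hl, rfl⟩
  rw [SetLike.mem_coe, RingHom.mem_ker]
  simp only [map_add, map_sub, map_mul]
  rw [minorHom_S, minorHom_S, minorHom_S, minorHom_S, minorHom_S, minorHom_S, minor_plucker]
  all_goals lia

theorem S_notMem_IY {i j : ℕ} (hi : 1 ≤ i) (hij : i < j) (hj : j ≤ n + 2) :
    S K n i j ∉ IY K n := by
  intro hmem
  have hzero : minorHom K n (Pi.single i (1 : K)) (Pi.single j 1) (S K n i j) = 0 :=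
    IY_le_ker_minorHom _ _ hmem
  simp [minorHom_S _ _ hi hij hj, minor, hij.ne'] at hzero

end Minors

section Straightening

variable {K : Type*} [Field K] {n : ℕ}

variable (K n) in
/-- The ideal of the hyperplane section `S_{n+1,n+2} = 0` of the variety of `I_Y`. -/
noncomputable def sectionIdeal : Ideal (MvPolynomial (PairIdx n) K) :=
  IY K n ⊔ Ideal.span {S K n (n + 1) (n + 2)}

/-- Standard exponents: the index pairs that occur form a chain for the componentwise order, and
`(n + 1, n + 2)`, the only pair with first component above `n`, does not occur. The corresponding
monomials form a basis of the coordinate ring of the hyperplane section. -/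
structure IsStandard (m : PairIdx n →₀ ℕ) : Prop where
  isChain : IsChain (· ≤ ·) (m.support : Set (PairIdx n))
  fst_le : ∀ p ∈ m.support, p.1.1 ≤ n

/-- The weight that decreases when a Plücker relation replaces a nested pair of index pairs;
squaring makes it strictly convex in the width `j - i`. -/
def spread (p : PairIdx n) : ℕ := (p.1.2 - p.1.1) ^ 2

theorem exists_nested_of_not_isChain {s : Set (PairIdx n)} (hs : ¬ IsChain (· ≤ ·) s) :
    ∃ p ∈ s, ∃ q ∈ s, p.1.1 < q.1.1 ∧ q.1.2 < p.1.2 := by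
  simp only [IsChain, Set.Pairwise, not_forall, not_or] at hs
  obtain ⟨p, hp, q, hq, -, hpq, hqp⟩ := hs
  simp only [← Subtype.coe_le_coe, Prod.le_def] at hpq hqp
  by_cases hlt : p.1.1 < q.1.1
  · exact ⟨p, hp, q, hq, by lia⟩
  · exact ⟨q, hq, p, hp, by lia⟩

variable (K) in
theorem exists_straightening {p q : PairIdx n} (hfst : p.1.1 < q.1.1) (hsnd : q.1.2 < p.1.2) :
    ∃ a b c d : PairIdx n, X p * X q - (X a * X b - X c * X d) ∈ IY K n ∧
      spread a + spread b < spread p + spread q ∧ spread c + spread d < spread p + spread q := by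
  obtain ⟨⟨i, l⟩, hi, hil, hl⟩ := p
  obtain ⟨⟨j, k⟩, hj, hjk, hk⟩ := q
  simp only at hi hil hl hj hjk hk hfst hsnd
  refine ⟨⟨(i, k), by lia⟩, ⟨(j, l), by lia⟩, ⟨(i, j), by lia⟩, ⟨(k, l), by lia⟩, ?_, ?_, ?_⟩
  · refine Ideal.subset_span ⟨i, j, k, l, hi, hfst, hjk, hsnd, hl, ?_⟩
    simp only [← S_eq_X]
    ring
  all_goals
    simp only [spread]
    zify [hil.le, hjk.le, hfst.le, hsnd.le, (hfst.trans hjk).le, (hjk.trans hsnd).le] at *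
    nlinarith [mul_pos (sub_pos.mpr hfst) (sub_pos.mpr hsnd)]

theorem monomial_mem_sectionIdeal {m : PairIdx n →₀ ℕ} {p : PairIdx n} (hp : p ∈ m.support)
    (hfst : n < p.1.1) : monomial m (1 : K) ∈ sectionIdeal K n := by
  have hpS : X p = S K n (n + 1) (n + 2) := by
    rw [← S_eq_X, show p.1.1 = n + 1 by grind, show p.1.2 = n + 2 by grind]
  have hdvd : X p ∣ monomial m (1 : K) := by
    rw [X_dvd_monomial]
    exact .inr (Finsupp.mem_support_iff.mp hp)
  exact Ideal.mem_sup_right (Ideal.mem_span_singleton.mpr (hpS ▸ hdvd))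

variable (K) in
theorem monomial_mem_sectionIdeal_sup_standard (m : PairIdx n →₀ ℕ) :
    monomial m (1 : K) ∈ (sectionIdeal K n).restrictScalars K ⊔
      restrictSupport K {m | IsStandard m} := by
  induction hw : Finsupp.weight spread m using Nat.strong_induction_on generalizing m with
  | _ w ih =>
  subst hw
  by_cases hchain : IsChain (· ≤ ·) (m.support : Set (PairIdx n))
  · by_cases hfst : ∀ p ∈ m.support, p.1.1 ≤ n
    · exact Submodule.mem_sup_right ((monomial_mem_restrictSupport _).mpr (.inl ⟨hchain, hfst⟩))
    · push Not at hfst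
      obtain ⟨p, hp, hlt⟩ := hfst
      exact Submodule.mem_sup_left (monomial_mem_sectionIdeal hp hlt)
  · obtain ⟨p, hp, q, hq, hfst, hsnd⟩ := exists_nested_of_not_isChain hchain
    obtain ⟨m₀, rfl⟩ := exists_eq_single_add_single_add (by grind) hp hq
    obtain ⟨a, b, c, d, hrel, hab, hcd⟩ := exists_straightening K hfst hsnd
    have hmem_ab := ih _ (by simp only [map_add, Finsupp.weight_single, one_smul]; lia)
      (Finsupp.single a 1 + (Finsupp.single b 1 + m₀)) rfl
    have hmem_cd := ih _ (by simp only [map_add, Finsupp.weight_single, one_smul]; lia)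
      (Finsupp.single c 1 + (Finsupp.single d 1 + m₀)) rfl
    have hmem_rel : (X p * X q - (X a * X b - X c * X d)) * monomial m₀ 1 ∈
        (sectionIdeal K n).restrictScalars K :=
      Ideal.mul_mem_right _ _ (Ideal.mem_sup_left hrel)
    simp only [monomial_single_add, pow_one] at hmem_ab hmem_cd ⊢
    convert add_mem (Submodule.mem_sup_left hmem_rel) (sub_mem hmem_ab hmem_cd) using 1
    ring

variable (K n) in
theorem sectionIdeal_sup_standard_eq_top :
    (sectionIdeal K n).restrictScalars K ⊔ restrictSupport K {m | IsStandard m} = ⊤ := by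
  rw [eq_top_iff, ← (basisMonomials (PairIdx n) K).span_eq, Submodule.span_le]
  rintro _ ⟨m, rfl⟩
  rw [coe_basisMonomials]
  exact monomial_mem_sectionIdeal_sup_standard K m

end Straightening

section TruncatedMatrix

variable {K : Type*} [Field K] {n : ℕ}

/-- Positions in a matrix with two rows and columns indexed by `ℕ`. Under the lexicographic monomial
order, in which smaller indices are larger variables, the dual makes the second row dominate the
first and later columns dominate earlier ones. -/
abbrev Entry : Type := (Fin 2 ×ₗ ℕ)ᵒᵈ

/-- The position in row `r` and column `j`. -/
def entry (r : Fin 2) (j : ℕ) : Entry := OrderDual.toDual (toLex (r, j))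

theorem entry_inj {r r' : Fin 2} {j j' : ℕ} : entry r j = entry r' j' ↔ r = r' ∧ j = j' := by
  simp [entry]

variable (K n) in
/-- The first row of the generic matrix, with the entries past `n` set to zero so that the minor on
columns `n + 1` and `n + 2` vanishes. -/
noncomputable def truncatedRow (i : ℕ) : MvPolynomial Entry K :=
  if i ≤ n then X (entry 0 i) else 0

variable (K n) in
/-- The minor on columns `i` and `j` of the truncated generic matrix. -/
noncomputable def truncatedMinor (i j : ℕ) : MvPolynomial Entry K :=
  minor (truncatedRow K n) (fun k ↦ X (entry 1 k)) i j

variable (K n) in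
/-- The Plücker parametrization of the hyperplane section `S_{n+1,n+2} = 0`. -/
noncomputable def truncatedMinorHom : MvPolynomial (PairIdx n) K →ₐ[K] MvPolynomial Entry K :=
  minorHom K n (truncatedRow K n) fun k ↦ X (entry 1 k)

theorem truncatedMinorHom_S {i j : ℕ} (hi : 1 ≤ i) (hij : i < j) (hj : j ≤ n + 2) :
    truncatedMinorHom K n (S K n i j) = truncatedMinor K n i j :=
  minorHom_S _ _ hi hij hj

theorem truncatedMinorHom_S_last : truncatedMinorHom K n (S K n (n + 1) (n + 2)) = 0 := by
  rw [truncatedMinorHom_S (by lia) (by lia) le_rfl]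
  simp [truncatedMinor, minor, truncatedRow]

theorem truncatedRow_mul_X {i : ℕ} (hi : i ≤ n) (j : ℕ) :
    truncatedRow K n i * X (entry 1 j) =
      monomial (Finsupp.single (entry 0 i) 1 + Finsupp.single (entry 1 j) 1) 1 := by
  simp [truncatedRow, hi, X, monomial_mul]

theorem degree_antidiagonal_lt {i j : ℕ} (hi : i ≤ n) (hij : i < j) :
    MonomialOrder.lex.degree (truncatedRow K n j * X (entry 1 i)) ≺[MonomialOrder.lex]
      MonomialOrder.lex.degree (truncatedRow K n i * X (entry 1 j)) := by
  classical
  rw [truncatedRow_mul_X hi, MonomialOrder.degree_monomial, if_neg one_ne_zero]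
  by_cases hj : j ≤ n
  · rw [truncatedRow_mul_X hj, MonomialOrder.degree_monomial, if_neg one_ne_zero]
    refine lex_single_add_single_lt ?_ ?_ _
    · exact OrderDual.toDual_lt_toDual.mpr (Prod.Lex.toLex_lt_toLex.mpr (.inl zero_lt_one))
    · exact OrderDual.toDual_lt_toDual.mpr (Prod.Lex.toLex_lt_toLex.mpr (.inr ⟨rfl, hij⟩))
  · rw [truncatedRow, if_neg hj, zero_mul, MonomialOrder.degree_zero, map_zero,
      MonomialOrder.toSyn_lt_iff_ne_zero, Ne, MonomialOrder.toSyn_eq_zero_iff]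
    simp

theorem degree_truncatedMinor {i j : ℕ} (hi : i ≤ n) (hij : i < j) :
    MonomialOrder.lex.degree (truncatedMinor K n i j) =
      Finsupp.single (entry 0 i) 1 + Finsupp.single (entry 1 j) 1 := by
  classical
  rw [truncatedMinor, minor, MonomialOrder.degree_sub_of_lt (degree_antidiagonal_lt hi hij),
    truncatedRow_mul_X hi, MonomialOrder.degree_monomial, if_neg one_ne_zero]

theorem monic_truncatedMinor {i j : ℕ} (hi : i ≤ n) (hij : i < j) :
    MonomialOrder.lex.Monic (truncatedMinor K n i j) := by
  rw [MonomialOrder.Monic, truncatedMinor, minor,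
    MonomialOrder.leadingCoeff_sub_of_lt (degree_antidiagonal_lt hi hij),
    truncatedRow_mul_X hi, MonomialOrder.leadingCoeff_monomial]

theorem truncatedMinorHom_monomial (m : PairIdx n →₀ ℕ) :
    truncatedMinorHom K n (monomial m 1) =
      ∏ p ∈ m.support, truncatedMinor K n p.1.1 p.1.2 ^ m p := by
  rw [truncatedMinorHom, minorHom, aeval_monomial, map_one, one_mul]
  rfl

/-- The exponent of the product of the diagonal terms `x_i y_j`, with multiplicities `m`. -/
noncomputable def diagonalExponent (m : PairIdx n →₀ ℕ) : Entry →₀ ℕ :=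
  m.mapDomain (fun p ↦ entry 0 p.1.1) + m.mapDomain (fun p ↦ entry 1 p.1.2)

theorem diagonalExponent_entry_zero (m : PairIdx n →₀ ℕ) (i : ℕ) :
    diagonalExponent m (entry 0 i) = m.mapDomain (fun p ↦ p.1.1) i := by
  rw [diagonalExponent, Finsupp.add_apply,
    Finsupp.mapDomain_of_notMem_range (f := fun p : PairIdx n ↦ entry 1 p.1.2) _ _
      (by simp [entry_inj]), add_zero,
    ← Function.comp_def (entry 0), Finsupp.mapDomain_comp,
    Finsupp.mapDomain_apply fun _ _ h ↦ (entry_inj.mp h).2]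

theorem diagonalExponent_entry_one (m : PairIdx n →₀ ℕ) (j : ℕ) :
    diagonalExponent m (entry 1 j) = m.mapDomain (fun p ↦ p.1.2) j := by
  rw [diagonalExponent, Finsupp.add_apply,
    Finsupp.mapDomain_of_notMem_range (f := fun p : PairIdx n ↦ entry 0 p.1.1) _ _
      (by simp [entry_inj]), zero_add,
    ← Function.comp_def (entry 1), Finsupp.mapDomain_comp,
    Finsupp.mapDomain_apply fun _ _ h ↦ (entry_inj.mp h).2]

theorem diagonalExponent_injOn :
    Set.InjOn (diagonalExponent (n := n)) {m | IsStandard m} := by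
  intro m hm m' hm' heq
  have hfst : Monotone fun p : PairIdx n ↦ p.1.1 := monotone_fst.comp (Subtype.mono_coe _)
  have hsnd : Monotone fun p : PairIdx n ↦ p.1.2 := monotone_snd.comp (Subtype.mono_coe _)
  refine finsupp_eq_of_isChain_of_mapDomain_eq hfst hsnd
    (fun _ _ hfst hsnd ↦ Subtype.ext (Prod.ext hfst hsnd)) hm.isChain hm'.isChain ?_ ?_
  · ext i
    rw [← diagonalExponent_entry_zero, heq, diagonalExponent_entry_zero]
  · ext j
    rw [← diagonalExponent_entry_one, heq, diagonalExponent_entry_one]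

theorem IsStandard.monic_truncatedMinorHom {m : PairIdx n →₀ ℕ} (hm : IsStandard m) :
    MonomialOrder.lex.Monic (truncatedMinorHom K n (monomial m 1)) := by
  rw [truncatedMinorHom_monomial]
  exact MonomialOrder.Monic.prod fun p hp ↦ (monic_truncatedMinor (hm.fst_le p hp) p.2.2.1).pow

theorem IsStandard.degree_truncatedMinorHom {m : PairIdx n →₀ ℕ} (hm : IsStandard m) :
    MonomialOrder.lex.degree (truncatedMinorHom K n (monomial m 1)) = diagonalExponent m := by
  have hmonic (p) (hp : p ∈ m.support) := monic_truncatedMinor (K := K) (hm.fst_le p hp) p.2.2.1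
  rw [truncatedMinorHom_monomial, MonomialOrder.degree_prod fun p hp ↦ (hmonic p hp).pow.ne_zero,
    diagonalExponent, Finsupp.mapDomain, Finsupp.mapDomain, Finsupp.sum, Finsupp.sum,
    ← Finset.sum_add_distrib]
  refine Finset.sum_congr rfl fun p hp ↦ ?_
  rw [MonomialOrder.degree_pow, degree_truncatedMinor (hm.fst_le p hp) p.2.2.1, nsmul_add,
    Finsupp.smul_single_one, Finsupp.smul_single_one]

variable (K n) in
theorem linearIndependent_truncatedMinorHom_standard :
    LinearIndependent K fun m : {m : PairIdx n →₀ ℕ // IsStandard m} ↦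
      truncatedMinorHom K n (monomial m.1 1) := by
  refine linearIndependent_of_monic_of_injective_degree MonomialOrder.lex
    (fun m ↦ m.2.monic_truncatedMinorHom) fun m m' heq ↦ Subtype.ext ?_
  simp only [m.2.degree_truncatedMinorHom, m'.2.degree_truncatedMinorHom] at heq
  exact diagonalExponent_injOn m.2 m'.2 heq

variable (K n) in
theorem disjoint_standard_ker_truncatedMinorHom :
    Disjoint (restrictSupport K {m : PairIdx n →₀ ℕ | IsStandard m})
      (LinearMap.ker (truncatedMinorHom K n).toLinearMap) := by
  rw [restrictSupport_eq_span, Set.image_eq_range]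
  exact Submodule.range_ker_disjoint (linearIndependent_truncatedMinorHom_standard K n)

variable (K n) in
theorem sectionIdeal_le_ker_truncatedMinorHom :
    sectionIdeal K n ≤ RingHom.ker (truncatedMinorHom K n) := by
  refine sup_le (IY_le_ker_minorHom _ _) ?_
  rw [Ideal.span_singleton_le_iff_mem]
  exact truncatedMinorHom_S_last

variable (K n) in
theorem sectionIdeal_eq_ker_truncatedMinorHom :
    sectionIdeal K n = RingHom.ker (truncatedMinorHom K n) := by
  have hdisj := (disjoint_standard_ker_truncatedMinorHom K n).symm
  have heq : (sectionIdeal K n).restrictScalars K =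
      LinearMap.ker (truncatedMinorHom K n).toLinearMap :=
    eq_of_le_of_inf_le_of_le_sup (sectionIdeal_le_ker_truncatedMinorHom K n)
      (hdisj.eq_bot.trans_le bot_le) (le_top.trans_eq (sectionIdeal_sup_standard_eq_top K n).symm)
  ext x
  exact SetLike.ext_iff.mp heq x

end TruncatedMatrix

end Plucker

open Plucker in
theorem stmt9_general (K : Type*) [Field K] (n : ℕ) :
    Prime (Ideal.Quotient.mk (IY K n) (S K n (n + 1) (n + 2))) ∧
    ∀ i j : ℕ, 1 ≤ i → i < j → j ≤ n + 2 → (i, j) ≠ (n + 1, n + 2) →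
      ¬ (Ideal.Quotient.mk (IY K n) (S K n (n + 1) (n + 2)) ∣
          Ideal.Quotient.mk (IY K n) (S K n i j)) := by
  constructor
  · have hprime : (sectionIdeal K n).IsPrime := by
      rw [sectionIdeal_eq_ker_truncatedMinorHom]
      exact RingHom.ker_isPrime _
    exact prime_quotientMk_of_isPrime_sup_span_singleton
      (S_notMem_IY (by lia) (by lia) le_rfl) hprime
  · intro i j hi hij hj hne
    have hin : i ≤ n := by grind
    rw [quotientMk_dvd_quotientMk_iff, ← sectionIdeal, sectionIdeal_eq_ker_truncatedMinorHom,
      RingHom.mem_ker, truncatedMinorHom_S hi hij hj]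
    exact (monic_truncatedMinor hin hij).ne_zero

/-- In the quotient ring `R_Y/I_Y` the residue class of the variable
`S_{n+1,n+2}` is a prime element and does not divide the residue class of any
variable `S_{ij}` with `(i,j) ≠ (n+1,n+2)`. -/
theorem stmt9 (K : Type*) [Field K] [IsAlgClosed K] (n : ℕ) (hn : 2 ≤ n) :
    Prime (Ideal.Quotient.mk (IY K n) (S K n (n + 1) (n + 2))) ∧
    ∀ i j : ℕ, 1 ≤ i → i < j → j ≤ n + 2 → (i, j) ≠ (n + 1, n + 2) →
      ¬ (Ideal.Quotient.mk (IY K n) (S K n (n + 1) (n + 2)) ∣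
          Ideal.Quotient.mk (IY K n) (S K n i j)) :=
  stmt9_general K n
end

section
/- Let K be an algebraically closed field, r ≥ 1 an integer, and n_1, …, n_r ≥ 1 integers. Let R_X be the polynomial ring over K in the variables T_∞ and _sT_{ij} for s = 1, …, r and 0 ≤ i < j ≤ n_s + 2 with i ≤ n_s. For each s let I(s) ⊆ R_X be the ideal generated by the twisted Plücker relations _sT_{ij}·T_∞ − _sT_{i,n_s+1}·_sT_{j,n_s+2} + _sT_{i,n_s+2}·_sT_{j,n_s+1} for 0 ≤ i < j ≤ n_s, together with the Plücker relations _sT_{ij}·_sT_{kl} − _sT_{ik}·_sT_{jl} + _sT_{il}·_sT_{jk} for 0 ≤ i < j < k < l ≤ n_s + 2 with k ≤ n_s. Then the ideal I_X := I(1) + … + I(r) is a prime ideal of R_X. -/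
open MvPolynomial

/-- The index set of the polynomial ring `R_X` in the variables `T_∞` (the
index `none`) and `_sT_{ij}` for `s = 1,…,r` and `0 ≤ i < j ≤ n_s + 2` with
`i ≤ n_s`. -/
abbrev IdxX (r : ℕ) (n : Fin r → ℕ) : Type :=
  Option (Σ s : Fin r, {p : ℕ × ℕ // p.1 < p.2 ∧ p.2 ≤ n s + 2 ∧ p.1 ≤ n s})

/-- The variable `T_∞`. -/
noncomputable def Tinf (K : Type*) [Field K] (r : ℕ) (n : Fin r → ℕ) :
    MvPolynomial (IdxX r n) K := X none

/-- The variable `_sT_{ab}` (junk value `0` for invalid index pairs). -/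
noncomputable def T (K : Type*) [Field K] (r : ℕ) (n : Fin r → ℕ)
    (s : Fin r) (a b : ℕ) : MvPolynomial (IdxX r n) K :=
  if h : a < b ∧ b ≤ n s + 2 ∧ a ≤ n s then X (some ⟨s, ⟨(a, b), h⟩⟩) else 0

/-- The ideal `I_X = I(1) + … + I(r)` where `I(s)` is generated by the twisted
Plücker relations
`_sT_{ij}·T_∞ − _sT_{i,n_s+1}·_sT_{j,n_s+2} + _sT_{i,n_s+2}·_sT_{j,n_s+1}`
(`0 ≤ i < j ≤ n_s`) and the Plücker relations
`_sT_{ij}·_sT_{kl} − _sT_{ik}·_sT_{jl} + _sT_{il}·_sT_{jk}`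
(`0 ≤ i < j < k < l ≤ n_s + 2`, `k ≤ n_s`). -/
noncomputable def IX (K : Type*) [Field K] (r : ℕ) (n : Fin r → ℕ) :
    Ideal (MvPolynomial (IdxX r n) K) :=
  Ideal.span {x : MvPolynomial (IdxX r n) K | ∃ s : Fin r,
    (∃ i j : ℕ, i < j ∧ j ≤ n s ∧
      x = T K r n s i j * Tinf K r n
        - T K r n s i (n s + 1) * T K r n s j (n s + 2)
        + T K r n s i (n s + 2) * T K r n s j (n s + 1)) ∨
    (∃ i j k l : ℕ, i < j ∧ j < k ∧ k < l ∧ l ≤ n s + 2 ∧ k ≤ n s ∧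
      x = T K r n s i j * T K r n s k l - T K r n s i k * T K r n s j l
        + T K r n s i l * T K r n s j k)}

/-!
With `T_∞` in the role of `_sT_{n_s+1,n_s+2}`, the twisted relations become ordinary Plücker
relations on `0 ≤ i < j < k < l ≤ n_s + 2`. They hold among the maximal minors of a
`2 × (n_s + 3)` matrix, and all blocks can be given the same last minor `x y` by letting the last
two columns be `(x, y_s)` and `(0, y)`. Then `I_X` is the kernel of the resulting map to a
polynomial ring, hence prime. Indeed, modulo `I_X` every monomial is a combination of monomials
without nested factors `_sT_{il} · _sT_{jk}`, `i < j < k < l`, because the Plücker relations replace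
such a product by products of smaller total squared width. The images of the non-nesting
monomials are linearly independent: the lexicographic leading monomial of a product of minors
records how often each first and each second index occurs, and this determines a non-nesting
monomial.
-/

namespace TwistedPlucker

section NonNesting

variable {ι α β : Type*}

theorem exists_lt_of_mapDomain_eq {φ : ι → α} {f g : ι →₀ ℕ}
    (h : f.mapDomain φ = g.mapDomain φ) {u : ι} (hu : f u < g u) :
    ∃ v, φ v = φ u ∧ g v < f v := by
  classical
  by_contra! hle
  have fibre_sum : ∀ p : ι →₀ ℕ, p.support ⊆ f.support ∪ g.support →
      p.mapDomain φ (φ u) = ∑ v ∈ f.support ∪ g.support with φ v = φ u, p v := by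
    intro p hp
    rw [Finsupp.mapDomain_apply_eq_sum]
    refine Finset.sum_subset (Finset.filter_subset_filter _ hp) fun v hv hv' ↦ ?_
    simpa [(Finset.mem_filter.1 hv).2] using hv'
  have hlt : f.mapDomain φ (φ u) < g.mapDomain φ (φ u) := by
    rw [fibre_sum f Finset.subset_union_left, fibre_sum g Finset.subset_union_right]
    refine Finset.sum_lt_sum (fun v hv ↦ hle v (Finset.mem_filter.1 hv).2) ⟨u, ?_, hu⟩
    simp [(Nat.zero_le _).trans_lt hu |>.ne']
  exact hlt.ne (by rw [h])

/-- A table `f` of multiplicities on the cells `ι`, placed in a grid by `row` and `col`, is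
non-nesting if of two cells `(a, d)` and `(c, b)` with `a < c` and `b < d` one has multiplicity
zero, provided the corner `(a, b)` is a cell as well. For Plücker coordinates this says that no
`_sT_{il}` and `_sT_{jk}` with `i < j < k < l` occur together in a monomial; requiring the corner to
be a cell keeps apart the different blocks `s`, which share their last column. -/
def IsNonNesting [LT α] [LT β] (row : ι → α) (col : ι → β) (f : ι →₀ ℕ) : Prop :=
  ∀ u v v', row v = row u → col v' = col u → row u < row v' → col u < col v → f v = 0 ∨ f v' = 0

theorem IsNonNesting.eq_of_mapDomain_eq [LinearOrder α] [LinearOrder β]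
    {row : ι → α} {col : ι → β} (hinj : ∀ u v, row u = row v → col u = col v → u = v)
    {f g : ι →₀ ℕ} (hf : IsNonNesting row col f) (hg : IsNonNesting row col g)
    (hrow : f.mapDomain row = g.mapDomain row) (hcol : f.mapDomain col = g.mapDomain col) :
    f = g := by
  classical
  by_contra hne
  -- At the lexicographically first cell where `f` and `g` differ, equality of the row sums and of
  -- the column sums forces two later cells, in the same row and column, which form a nesting.
  obtain ⟨u, hu, hmin⟩ := (f.neLocus g).exists_min_image (fun u ↦ toLex (row u, col u))
    (Finsupp.nonempty_neLocus_iff.2 hne)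
  rw [Finsupp.mem_neLocus] at hu
  wlog hlt : f u < g u generalizing f g
  · exact this hg hf hrow.symm hcol.symm (Ne.symm hne) hu.symm (by rwa [Finsupp.neLocus_comm])
      (lt_of_le_of_ne (not_lt.1 hlt) hu.symm)
  have le_of_lt : ∀ v, g v < f v → toLex (row u, col u) ≤ toLex (row v, col v) := fun v hv ↦
    hmin v (Finsupp.mem_neLocus.2 hv.ne')
  obtain ⟨v, hvrow, hv⟩ := exists_lt_of_mapDomain_eq hrow hlt
  obtain ⟨v', hvcol, hv'⟩ := exists_lt_of_mapDomain_eq hcol hlt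
  have hcol_lt : col u < col v := by
    refine lt_of_le_of_ne ?_ fun h ↦ ?_
    · simpa [Prod.Lex.toLex_le_toLex, hvrow] using le_of_lt v hv
    · obtain rfl := hinj u v hvrow.symm h
      exact lt_asymm hlt hv
  have hrow_lt : row u < row v' := by
    refine lt_of_le_of_ne ?_ fun h ↦ ?_
    · exact Prod.Lex.monotone_fst _ _ (le_of_lt v' hv')
    · obtain rfl := hinj u v' h hvcol.symm
      exact lt_asymm hlt hv'
  rcases hf u v v' hvrow hvcol hrow_lt hcol_lt with h | h <;> omega

end NonNesting

theorem eq_and_eq_of_mapDomain_add_mapDomain_eq {α β γ M : Type*} [AddCommMonoid M]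
    {f : α → γ} {g : β → γ} (hf : Function.Injective f) (hg : Function.Injective g)
    (hfg : ∀ a b, f a ≠ g b) {p p' : α →₀ M} {q q' : β →₀ M}
    (h : p.mapDomain f + q.mapDomain g = p'.mapDomain f + q'.mapDomain g) :
    p = p' ∧ q = q' := by
  have notMem_range_g : ∀ a, f a ∉ Set.range g := fun a ⟨b, hb⟩ ↦ hfg a b hb.symm
  have notMem_range_f : ∀ b, g b ∉ Set.range f := fun b ⟨a, ha⟩ ↦ hfg a b ha
  constructor
  · ext a
    simpa [Finsupp.mapDomain_apply hf, Finsupp.mapDomain_of_notMem_range, notMem_range_g] using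
      DFunLike.congr_fun h (f a)
  · ext b
    simpa [Finsupp.mapDomain_apply hg, Finsupp.mapDomain_of_notMem_range, notMem_range_f] using
      DFunLike.congr_fun h (g b)

theorem linearIndependent_of_degree_injective {σ ι R : Type*} [CommRing R] [NoZeroDivisors R]
    (o : MonomialOrder σ) {v : ι → MvPolynomial σ R} (hne : ∀ i, v i ≠ 0)
    (hinj : Function.Injective fun i ↦ o.degree (v i)) : LinearIndependent R v := by
  classical
  rw [linearIndependent_iff']
  intro s g hsum
  by_contra! hg
  obtain ⟨i, hi, hmax⟩ := (s.filter (g · ≠ 0)).exists_max_image (fun i ↦ o.toSyn (o.degree (v i)))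
    (by simpa [Finset.Nonempty] using hg)
  rw [Finset.mem_filter] at hi
  have coeff_eq_zero : ∀ j ∈ s, j ≠ i → coeff (o.degree (v i)) (g j • v j) = 0 := by
    intro j hj hji
    by_cases hgj : g j = 0
    · simp [hgj]
    · have hle := hmax j (Finset.mem_filter.2 ⟨hj, hgj⟩)
      have hlt := lt_of_le_of_ne hle fun h ↦ hji (hinj (o.toSyn.injective h))
      rw [coeff_smul, o.coeff_eq_zero_of_lt hlt, smul_zero]
  have key : g i * o.leadingCoeff (v i) = 0 := by
    rw [← smul_eq_mul, MonomialOrder.leadingCoeff, ← coeff_smul,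
      ← Finset.sum_eq_single_of_mem i hi.1 coeff_eq_zero, ← coeff_sum, hsum, coeff_zero]
  exact (mul_ne_zero hi.2 (o.leadingCoeff_ne_zero_iff.2 (hne i))) key

theorem span_range_le_span_image_sup {ι R M α : Type*} [Semiring R] [AddCommMonoid M] [Module R M]
    [LT α] [WellFoundedLT α] (w : ι → α) {v : ι → M} {S : Set ι} {N : Submodule R M}
    (h : ∀ i ∉ S, v i ∈ Submodule.span R (v '' {j | w j < w i}) ⊔ N) :
    Submodule.span R (Set.range v) ≤ Submodule.span R (v '' S) ⊔ N := by
  rw [Submodule.span_le]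
  rintro _ ⟨i, rfl⟩
  induction i using (InvImage.wf w wellFounded_lt).induction with
  | h i ih =>
    by_cases hi : i ∈ S
    · exact Submodule.mem_sup_left (Submodule.subset_span ⟨i, hi, rfl⟩)
    · have hle : Submodule.span R (v '' {j | w j < w i}) ≤ Submodule.span R (v '' S) ⊔ N := by
        rw [Submodule.span_le]
        rintro _ ⟨j, hj, rfl⟩
        exact ih j hj
      exact sup_le hle le_sup_right (h i hi)

theorem monomial_mem_span_sup_of_X_mul_X {σ R : Type*} [CommRing R] (w : σ → ℕ)
    {I : Ideal (MvPolynomial σ R)} {p q a b c d : σ}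
    (hI : X p * X q - (X a * X b - X c * X d) ∈ I)
    (hab : w a + w b < w p + w q) (hcd : w c + w d < w p + w q)
    {m : σ →₀ ℕ} (hpq : p ≠ q) (hp : m p ≠ 0) (hq : m q ≠ 0) :
    monomial m (1 : R) ∈ Submodule.span R ((fun m ↦ monomial m (1 : R)) ''
      {m' | Finsupp.weight w m' < Finsupp.weight w m}) ⊔ I.restrictScalars R := by
  classical
  obtain ⟨m, rfl⟩ : ∃ m', m = Finsupp.single p 1 + Finsupp.single q 1 + m' := by
    refine exists_add_of_le fun x ↦ ?_
    simp only [Finsupp.add_apply, Finsupp.single_apply]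
    grind
  have monomial_eq : ∀ x y, monomial (Finsupp.single x 1 + Finsupp.single y 1 + m) (1 : R) =
      X x * X y * monomial m 1 := fun x y ↦ by simp [X, monomial_mul]
  have mem_span : ∀ x y, w x + w y < w p + w q → X x * X y * monomial m (1 : R) ∈
      Submodule.span R ((fun m ↦ monomial m (1 : R)) '' {m' | Finsupp.weight w m' <
        Finsupp.weight w (Finsupp.single p 1 + Finsupp.single q 1 + m)}) := fun x y h ↦
    Submodule.subset_span ⟨_, by simpa [Finsupp.weight_single] using h, monomial_eq x y⟩
  rw [monomial_eq]
  refine Submodule.mem_sup.2 ⟨_, sub_mem (mem_span a b hab) (mem_span c d hcd), _,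
    I.mul_mem_right (monomial m 1) hI, by ring⟩

theorem eq_ker_of_span_sup_eq_top {ι R A B : Type*} [CommRing R] [CommRing A] [CommRing B]
    [Algebra R A] [Algebra R B] {φ : A →ₐ[R] B} {I : Ideal A} (hI : I ≤ RingHom.ker φ)
    {v : ι → A} (hv : LinearIndependent R fun i ↦ φ (v i))
    (hspan : Submodule.span R (Set.range v) ⊔ I.restrictScalars R = ⊤) : I = RingHom.ker φ := by
  have hdisj : Disjoint (Submodule.span R (Set.range v)) ((RingHom.ker φ).restrictScalars R) :=
    Submodule.range_ker_disjoint (f := φ.toLinearMap) hv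
  refine Submodule.restrictScalars_injective R A A (eq_of_le_of_inf_le_of_sup_le hI
    (z := Submodule.span R (Set.range v)) ?_ ?_)
  · rw [inf_comm, hdisj.eq_bot]
    exact bot_le
  · rw [sup_comm (I.restrictScalars R), hspan]
    exact le_top

section PluckerRelations

variable (K : Type*) [Field K] {r : ℕ} (n : Fin r → ℕ)

/-- The index of the variable `_sT_{ij}`, with `T_∞` in the role of `_sT_{n_s+1,n_s+2}` for every
`s`. Pairs that are not of the form `i < j ≤ n_s + 2` also get the index of `T_∞`, as a junk
value. -/
def pairIdx (s : Fin r) (i j : ℕ) : IdxX r n :=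
  if h : i < j ∧ j ≤ n s + 2 ∧ i ≤ n s then some ⟨s, ⟨(i, j), h⟩⟩ else none

/-- The Plücker relation of block `s` on the indices `i, j, k, l`. By the convention of `pairIdx` it
is the twisted one for `k = n_s + 1` and `l = n_s + 2`. -/
noncomputable def pluckerRel (s : Fin r) (i j k l : ℕ) :
    MvPolynomial (IdxX r n) K :=
  X (pairIdx n s i j) * X (pairIdx n s k l) - X (pairIdx n s i k) * X (pairIdx n s j l) +
    X (pairIdx n s i l) * X (pairIdx n s j k)

theorem X_pairIdx_of_le {s : Fin r} {i j : ℕ} (hij : i < j)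
    (hj : j ≤ n s + 2) (hi : i ≤ n s) :
    X (pairIdx n s i j) = T K r n s i j := by
  rw [pairIdx, T, dif_pos ⟨hij, hj, hi⟩, dif_pos ⟨hij, hj, hi⟩]

theorem pairIdx_last (s : Fin r) : pairIdx n s (n s + 1) (n s + 2) = none :=
  dif_neg (by omega)

theorem pluckerRel_of_le {s : Fin r} {i j k l : ℕ} (hij : i < j)
    (hjk : j < k) (hkl : k < l) (hl : l ≤ n s + 2) (hk : k ≤ n s) :
    pluckerRel K n s i j k l = T K r n s i j * T K r n s k l - T K r n s i k * T K r n s j l +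
      T K r n s i l * T K r n s j k := by
  simp only [pluckerRel]
  rw [X_pairIdx_of_le, X_pairIdx_of_le, X_pairIdx_of_le, X_pairIdx_of_le, X_pairIdx_of_le,
    X_pairIdx_of_le] <;> omega

theorem pluckerRel_last {s : Fin r} {i j : ℕ} (hij : i < j) (hj : j ≤ n s) :
    pluckerRel K n s i j (n s + 1) (n s + 2) = T K r n s i j * Tinf K r n -
      T K r n s i (n s + 1) * T K r n s j (n s + 2) +
        T K r n s i (n s + 2) * T K r n s j (n s + 1) := by
  rw [pluckerRel, pairIdx_last, Tinf, X_pairIdx_of_le, X_pairIdx_of_le, X_pairIdx_of_le,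
    X_pairIdx_of_le, X_pairIdx_of_le] <;> omega

theorem IX_eq_span_pluckerRel :
    IX K r n = Ideal.span {x | ∃ s i j k l, i < j ∧ j < k ∧ k < l ∧ l ≤ n s + 2 ∧
      x = pluckerRel K n s i j k l} := by
  rw [IX]
  congr 1
  ext x
  refine exists_congr fun s ↦ ⟨?_, ?_⟩
  · rintro (⟨i, j, hij, hj, rfl⟩ | ⟨i, j, k, l, hij, hjk, hkl, hl, hk, rfl⟩)
    · exact ⟨i, j, n s + 1, n s + 2, hij, by omega, by omega, le_rfl,
        (pluckerRel_last K n hij hj).symm⟩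
    · exact ⟨i, j, k, l, hij, hjk, hkl, hl, (pluckerRel_of_le K n hij hjk hkl hl hk).symm⟩
  · rintro ⟨i, j, k, l, hij, hjk, hkl, hl, rfl⟩
    by_cases hk : k ≤ n s
    · exact Or.inr ⟨i, j, k, l, hij, hjk, hkl, hl, hk, pluckerRel_of_le K n hij hjk hkl hl hk⟩
    · obtain rfl : k = n s + 1 := by omega
      obtain rfl : l = n s + 2 := by omega
      exact Or.inl ⟨i, j, hij, by omega, pluckerRel_last K n hij (by omega)⟩

theorem pluckerRel_mem_IX {s : Fin r} {i j k l : ℕ} (hij : i < j)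
    (hjk : j < k) (hkl : k < l) (hl : l ≤ n s + 2) : pluckerRel K n s i j k l ∈ IX K r n := by
  rw [IX_eq_span_pluckerRel]
  exact Ideal.subset_span ⟨s, i, j, k, l, hij, hjk, hkl, hl, rfl⟩

end PluckerRelations

section Labels

variable {r : ℕ} (n : Fin r → ℕ)

/-- Labels of rows and columns: `(s, i)` belongs to block `s`, and `⊤` is shared by all blocks. -/
abbrev Label (r : ℕ) : Type := WithTop (Fin r ×ₗ ℕ)

/-- The variables of the parametrization, `x_a` and `y_b` for labels `a` and `b`. In
`MonomialOrder.lex` smaller variables weigh more, so the order dual makes every `y` dominate every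
`x` and larger labels dominate smaller ones. -/
abbrev ParamVar (r : ℕ) : Type := (Bool ×ₗ Label r)ᵒᵈ

/-- The variable `x_a`. -/
def xVar (a : Label r) : ParamVar r := OrderDual.toDual (toLex (false, a))

/-- The variable `y_b`. -/
def yVar (b : Label r) : ParamVar r := OrderDual.toDual (toLex (true, b))

theorem xVar_injective : Function.Injective (xVar (r := r)) := fun _ _ h ↦ by
  simpa [xVar] using h

theorem yVar_injective : Function.Injective (yVar (r := r)) := fun _ _ h ↦ by
  simpa [yVar] using h

theorem xVar_ne_yVar (a b : Label r) : xVar a ≠ yVar b := by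
  simp [xVar, yVar]

/-- The label of row `i` of block `s`; the row `n_s + 1` of `T_∞` is shared by all blocks. -/
def rowLabel (s : Fin r) (i : ℕ) : Label r := if i ≤ n s then ↑(toLex (s, i)) else ⊤

/-- The label of column `j` of block `s`; the column `n_s + 2` is shared by all blocks. -/
def colLabel (s : Fin r) (j : ℕ) : Label r := if j ≤ n s + 1 then ↑(toLex (s, j)) else ⊤

variable {n} in
/-- The row label `i` of the variable `_sT_{ij}`. -/
def row : IdxX r n → Label r
  | none => ⊤
  | some ⟨s, p⟩ => rowLabel n s p.1.1

variable {n} in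
/-- The column label `j` of the variable `_sT_{ij}`. -/
def col : IdxX r n → Label r
  | none => ⊤
  | some ⟨s, p⟩ => colLabel n s p.1.2

theorem eq_of_rowLabel_eq {s t : Fin r} {i k : ℕ} (hi : i ≤ n s)
    (h : rowLabel n t k = rowLabel n s i) : t = s ∧ k = i := by
  rw [rowLabel, rowLabel, if_pos hi] at h
  split_ifs at h
  · simpa using h
  · exact absurd h.symm WithTop.coe_ne_top

theorem eq_of_colLabel_eq {s t : Fin r} {j l : ℕ} (hj : j ≤ n s + 1)
    (h : colLabel n t l = colLabel n s j) : t = s ∧ l = j := by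
  rw [colLabel, colLabel, if_pos hj] at h
  split_ifs at h
  · simpa using h
  · exact absurd h.symm WithTop.coe_ne_top

theorem rowLabel_lt_rowLabel_iff {s : Fin r} {i k : ℕ} (hi : i ≤ n s) :
    rowLabel n s i < rowLabel n s k ↔ i < k := by
  rw [rowLabel, if_pos hi, rowLabel]
  split_ifs
  · simp [Prod.Lex.toLex_lt_toLex]
  · simpa using by omega

theorem colLabel_lt_colLabel_iff {s : Fin r} {j l : ℕ} (hj : j ≤ n s + 1) :
    colLabel n s j < colLabel n s l ↔ j < l := by
  rw [colLabel, if_pos hj, colLabel]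
  split_ifs
  · simp [Prod.Lex.toLex_lt_toLex]
  · simpa using by omega

theorem le_of_colLabel_lt {s : Fin r} {j : ℕ} {b : Label r} (h : colLabel n s j < b) :
    j ≤ n s + 1 := by
  by_contra hj
  rw [colLabel, if_neg hj] at h
  exact not_top_lt h

theorem eq_of_row_eq_of_col_eq (u v : IdxX r n) (hrow : row u = row v) (hcol : col u = col v) :
    u = v := by
  rcases u with _ | ⟨s, ⟨i, j⟩, hij, hj, hi⟩ <;> rcases v with _ | ⟨t, ⟨k, l⟩, hkl, hl, hk⟩
  · rfl
  · simp_all [row, rowLabel]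
  · simp_all [row, rowLabel]
  · obtain ⟨rfl, rfl⟩ := eq_of_rowLabel_eq n hk hrow
    obtain rfl : j = l := by
      by_cases hl' : l ≤ n s + 1
      · exact (eq_of_colLabel_eq n hl' hcol).2
      · by_cases hj' : j ≤ n s + 1
        · exact (eq_of_colLabel_eq n hj' hcol.symm).2.symm
        · simp only at hj hl
          omega
    rfl

theorem exists_nested_of_not_isNonNesting {m : IdxX r n →₀ ℕ} (hm : ¬ IsNonNesting row col m) :
    ∃ s i j k l, i < j ∧ j < k ∧ k < l ∧ l ≤ n s + 2 ∧
      m (pairIdx n s i l) ≠ 0 ∧ m (pairIdx n s j k) ≠ 0 := by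
  simp only [IsNonNesting] at hm
  push Not at hm
  obtain ⟨u, v, v', hrow, hcol, hrow_lt, hcol_lt, hv, hv'⟩ := hm
  obtain _ | ⟨s, ⟨i, k⟩, _, _, hi⟩ := u
  · exact absurd hrow_lt not_top_lt
  obtain _ | ⟨t, ⟨i', l⟩, hil⟩ := v
  · simp [row, rowLabel, hi] at hrow
  obtain _ | ⟨t', ⟨j, k'⟩, hjk⟩ := v'
  · exact absurd (hcol ▸ hcol_lt) not_top_lt
  have hk' : k ≤ n s + 1 := le_of_colLabel_lt n hcol_lt
  obtain ⟨rfl, rfl⟩ := eq_of_rowLabel_eq n hi hrow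
  obtain ⟨rfl, rfl⟩ := eq_of_colLabel_eq n hk' hcol
  refine ⟨_, i', j, k', l, (rowLabel_lt_rowLabel_iff n hi).1 hrow_lt, hjk.1,
    (colLabel_lt_colLabel_iff n hk').1 hcol_lt, hil.2.1, ?_, ?_⟩
  · rwa [pairIdx, dif_pos hil]
  · rwa [pairIdx, dif_pos hjk]

end Labels

section Parametrization

variable (K : Type*) [Field K] {r : ℕ} (n : Fin r → ℕ)

/-- The entry in column `i` of the first row of the `2 × (n_s + 3)` matrix of block `s`; the last
entry is zero, so that the minor of the last two columns is the same monomial for all `s`. -/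
noncomputable def xEntry (s : Fin r) (i : ℕ) : MvPolynomial (ParamVar r) K :=
  if i ≤ n s + 1 then X (xVar (rowLabel n s i)) else 0

/-- The entry in column `j` of the second row of the matrix of block `s`. -/
noncomputable def yEntry (s : Fin r) (j : ℕ) : MvPolynomial (ParamVar r) K :=
  X (yVar (colLabel n s j))

/-- The minor of columns `i` and `j` of the matrix of block `s`. -/
noncomputable def minor (s : Fin r) (i j : ℕ) : MvPolynomial (ParamVar r) K :=
  xEntry K n s i * yEntry K n s j - xEntry K n s j * yEntry K n s i

/-- The parametrization of the variables of `R_X` by the minors, with `T_∞` going to the common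
minor of the last two columns. -/
noncomputable def param : IdxX r n → MvPolynomial (ParamVar r) K
  | none => X (xVar ⊤) * X (yVar ⊤)
  | some ⟨s, p⟩ => minor K n s p.1.1 p.1.2

theorem param_pairIdx {s : Fin r} {i j : ℕ} (hij : i < j) (hj : j ≤ n s + 2) :
    param K n (pairIdx n s i j) = minor K n s i j := by
  by_cases hi : i ≤ n s
  · rw [pairIdx, dif_pos ⟨hij, hj, hi⟩, param]
  · obtain rfl : i = n s + 1 := by omega
    obtain rfl : j = n s + 2 := by omega
    simp [pairIdx, param, minor, xEntry, yEntry, rowLabel, colLabel]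

theorem aeval_param_pluckerRel {s : Fin r} {i j k l : ℕ} (hij : i < j)
    (hjk : j < k) (hkl : k < l) (hl : l ≤ n s + 2) :
    aeval (param K n) (pluckerRel K n s i j k l) = 0 := by
  simp only [pluckerRel, map_add, map_sub, map_mul, aeval_X]
  rw [param_pairIdx, param_pairIdx, param_pairIdx, param_pairIdx, param_pairIdx, param_pairIdx]
  · simp only [minor]
    ring
  all_goals omega

theorem IX_le_ker_aeval_param : IX K r n ≤ RingHom.ker (aeval (param K n)) := by
  rw [IX_eq_span_pluckerRel, Ideal.span_le]
  rintro _ ⟨s, i, j, k, l, hij, hjk, hkl, hl, rfl⟩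
  exact aeval_param_pluckerRel K n hij hjk hkl hl

open scoped MonomialOrder in
theorem lex_lt_of_lt {a a' b b' : Label r} (hb : b' < b) :
    Finsupp.single (xVar a') 1 + Finsupp.single (yVar b') 1 ≺[MonomialOrder.lex]
      Finsupp.single (xVar a) 1 + Finsupp.single (yVar b) 1 := by
  rw [MonomialOrder.lex_lt_iff]
  refine ⟨yVar b, fun c hc ↦ ?_, ?_⟩
  · have hx : ∀ d, xVar d ≠ c := by
      rintro d rfl
      exact absurd (Prod.Lex.monotone_fst _ _ (OrderDual.toDual_lt_toDual.1 hc).le)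
        (show ¬ true ≤ false by decide)
    have hy : ∀ d ≤ b, yVar d ≠ c := by
      rintro d hd rfl
      have hbd : b < d := by simpa [yVar, Prod.Lex.toLex_lt_toLex] using hc
      exact hbd.not_ge hd
    simp [hx, hy b le_rfl, hy b' hb.le]
  · simp [xVar_ne_yVar, yVar_injective.ne hb.ne]

theorem degree_X_mul_X (a b : Label r) :
    MonomialOrder.lex.degree (X (xVar a) * X (yVar b) : MvPolynomial (ParamVar r) K) =
      Finsupp.single (xVar a) 1 + Finsupp.single (yVar b) 1 := by
  rw [MonomialOrder.degree_mul (X_ne_zero _) (X_ne_zero _), MonomialOrder.degree_X,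
    MonomialOrder.degree_X]

theorem degree_minor {s : Fin r} {i j : ℕ} (hij : i < j) (hi : i ≤ n s) :
    MonomialOrder.lex.degree (minor K n s i j) =
      Finsupp.single (xVar (rowLabel n s i)) 1 + Finsupp.single (yVar (colLabel n s j)) 1 := by
  rw [minor, xEntry, if_pos (by omega), xEntry]
  split_ifs with hj
  · rw [yEntry, yEntry, MonomialOrder.degree_sub_of_lt, degree_X_mul_X]
    rw [degree_X_mul_X, degree_X_mul_X]
    exact lex_lt_of_lt ((colLabel_lt_colLabel_iff n (by omega)).2 hij)
  · rw [zero_mul, sub_zero, yEntry, degree_X_mul_X]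

theorem degree_param (v : IdxX r n) :
    MonomialOrder.lex.degree (param K n v) =
      Finsupp.single (xVar (row v)) 1 + Finsupp.single (yVar (col v)) 1 := by
  rcases v with _ | ⟨s, ⟨i, j⟩, hij, hj, hi⟩
  · exact degree_X_mul_X K ⊤ ⊤
  · exact degree_minor K n hij hi

theorem param_ne_zero (v : IdxX r n) : param K n v ≠ 0 := by
  refine MonomialOrder.ne_zero_of_degree_ne_zero (m := MonomialOrder.lex) ?_
  simp [degree_param]

theorem aeval_param_monomial_one (m : IdxX r n →₀ ℕ) :
    aeval (param K n) (monomial m (1 : K)) = m.prod fun v e ↦ param K n v ^ e := by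
  rw [aeval_monomial, map_one, one_mul]

theorem degree_aeval_param_monomial (m : IdxX r n →₀ ℕ) :
    MonomialOrder.lex.degree (aeval (param K n) (monomial m (1 : K))) =
      (m.mapDomain row).mapDomain xVar + (m.mapDomain col).mapDomain yVar := by
  rw [aeval_param_monomial_one, Finsupp.prod,
    MonomialOrder.degree_prod fun v _ ↦ pow_ne_zero _ (param_ne_zero K n v),
    ← Finsupp.mapDomain_comp, ← Finsupp.mapDomain_comp]
  simp only [MonomialOrder.degree_pow, degree_param, smul_add, Finsupp.smul_single, smul_eq_mul,
    mul_one, Finset.sum_add_distrib, Finsupp.mapDomain, Finsupp.sum, Function.comp_apply]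

theorem linearIndependent_aeval_param_nonNesting :
    LinearIndependent K fun m : {m : IdxX r n →₀ ℕ | IsNonNesting row col m} ↦
      aeval (param K n) (monomial m.1 (1 : K)) := by
  refine linearIndependent_of_degree_injective MonomialOrder.lex (fun m ↦ ?_) fun m m' h ↦ ?_
  · rw [aeval_param_monomial_one]
    exact Finset.prod_ne_zero_iff.2 fun v _ ↦ pow_ne_zero _ (param_ne_zero K n v)
  · simp only [degree_aeval_param_monomial] at h
    obtain ⟨hrow, hcol⟩ := eq_and_eq_of_mapDomain_add_mapDomain_eq xVar_injective yVar_injective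
      xVar_ne_yVar h
    exact Subtype.ext (m.2.eq_of_mapDomain_eq (eq_of_row_eq_of_col_eq n) m'.2 hrow hcol)

variable {n} in
/-- The squared width `(j - i) ^ 2` of `_sT_{ij}`, where `T_∞` counts as `_sT_{n_s+1,n_s+2}`. The
Plücker relations rewrite a nested product into products of smaller total squared width. -/
def sqWidth : IdxX r n → ℕ
  | none => 1
  | some ⟨_, p⟩ => (p.1.2 - p.1.1) ^ 2

theorem sqWidth_pairIdx {s : Fin r} {i j : ℕ} (hij : i < j) (hj : j ≤ n s + 2) :
    sqWidth (pairIdx n s i j) = (j - i) ^ 2 := by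
  by_cases hi : i ≤ n s
  · rw [pairIdx, dif_pos ⟨hij, hj, hi⟩, sqWidth]
  · obtain rfl : i = n s + 1 := by omega
    obtain rfl : j = n s + 2 := by omega
    simp [pairIdx, sqWidth]

theorem sq_width_lt {i j k l : ℕ} (hij : i < j) (hjk : j < k) (hkl : k < l) :
    (k - i) ^ 2 + (l - j) ^ 2 < (l - i) ^ 2 + (k - j) ^ 2 ∧
      (j - i) ^ 2 + (l - k) ^ 2 < (l - i) ^ 2 + (k - j) ^ 2 := by
  zify [hij.le, hjk.le, hkl.le, (hij.trans hjk).le, (hjk.trans hkl).le,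
    ((hij.trans hjk).trans hkl).le] at *
  constructor
  · nlinarith [mul_pos (sub_pos.2 hij) (sub_pos.2 hkl)]
  · nlinarith [mul_pos (sub_pos.2 hij) (sub_pos.2 hkl), mul_pos (sub_pos.2 hij) (sub_pos.2 hjk),
      mul_pos (sub_pos.2 hjk) (sub_pos.2 hkl)]

theorem pairIdx_ne_of_nested {s : Fin r} {i j k l : ℕ} (hij : i < j) (hjk : j < k) (hkl : k < l)
    (hl : l ≤ n s + 2) : pairIdx n s i l ≠ pairIdx n s j k := by
  rw [pairIdx, pairIdx, dif_pos (by omega), dif_pos (by omega)]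
  simp [hij.ne]

theorem monomial_mem_span_sup_IX {m : IdxX r n →₀ ℕ} (hm : ¬ IsNonNesting row col m) :
    monomial m (1 : K) ∈ Submodule.span K ((fun m ↦ monomial m (1 : K)) ''
      {m' | Finsupp.weight sqWidth m' < Finsupp.weight sqWidth m}) ⊔
        (IX K r n).restrictScalars K := by
  obtain ⟨s, i, j, k, l, hij, hjk, hkl, hl, hm_il, hm_jk⟩ :=
    exists_nested_of_not_isNonNesting n hm
  have hrel : X (pairIdx n s i l) * X (pairIdx n s j k) -
      (X (pairIdx n s i k) * X (pairIdx n s j l) - X (pairIdx n s i j) * X (pairIdx n s k l)) ∈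
        IX K r n := by
    convert pluckerRel_mem_IX K n hij hjk hkl hl using 1
    rw [pluckerRel]
    ring
  obtain ⟨hlt_ik_jl, hlt_ij_kl⟩ := sq_width_lt hij hjk hkl
  refine monomial_mem_span_sup_of_X_mul_X sqWidth hrel ?_ ?_
    (pairIdx_ne_of_nested n hij hjk hkl hl) hm_il hm_jk
  all_goals
    rw [sqWidth_pairIdx, sqWidth_pairIdx, sqWidth_pairIdx, sqWidth_pairIdx] <;> omega

theorem span_nonNesting_sup_IX_eq_top :
    Submodule.span K (Set.range fun m : {m : IdxX r n →₀ ℕ | IsNonNesting row col m} ↦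
      monomial m.1 (1 : K)) ⊔ (IX K r n).restrictScalars K = ⊤ := by
  have h := span_range_le_span_image_sup (Finsupp.weight sqWidth)
    (S := {m : IdxX r n →₀ ℕ | IsNonNesting row col m}) fun m hm ↦ monomial_mem_span_sup_IX K n hm
  rw [← coe_basisMonomials, (basisMonomials _ K).span_eq, coe_basisMonomials, Set.image_eq_range,
    top_le_iff] at h
  exact h

theorem IX_eq_ker_aeval_param : IX K r n = RingHom.ker (aeval (param K n)) :=
  eq_ker_of_span_sup_eq_top (IX_le_ker_aeval_param K n)
    (linearIndependent_aeval_param_nonNesting K n) (span_nonNesting_sup_IX_eq_top K n)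

end Parametrization

end TwistedPlucker

theorem stmt10_general (K : Type*) [Field K] (r : ℕ) (n : Fin r → ℕ) : (IX K r n).IsPrime := by
  rw [TwistedPlucker.IX_eq_ker_aeval_param]
  exact RingHom.ker_isPrime _

/-- The ideal `I_X` is a prime ideal of `R_X`. -/
theorem stmt10 (K : Type*) [Field K] [IsAlgClosed K]
    (r : ℕ) (hr : 1 ≤ r) (n : Fin r → ℕ) (hn : ∀ s, 1 ≤ n s) :
    (IX K r n).IsPrime :=
  stmt10_general K r n
end
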